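/- arXiv:1302.6191 — 2 statements merged into one kernel-verified Lean document; each statement's English description precedes it below -/
import Mathlib

section
/- There exists a constant c > 0 such that for all positive integers M and N, the (1/3)-approximate degree of the two-level AND-OR tree satisfies deg_{1/3}(AND-OR^M_N) ≥ c·√(M·N). -/
/-!
A polynomial `p` of degree `d` approximating `AND_M ∘ OR_N` is averaged block by block down to a function
of `M` bits, and a dual witness for the outer `AND_M` is then applied to the result.

The single analytic ingredient is `exists_dualPair`: on `n` variables there are two probability
distributions `μ`, `ν` with the same mean on every function of degree less than `D`, where
`D ≥ √(n / 21)`, such that `μ` puts mass at least `5/6` on the all-`1` point and `ν` puts none. They are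
mixtures of uniform distributions on Hamming slices. Slice averages of a polynomial of degree `s` are
polynomials of degree at most `s` in the slice index, so this reduces to a univariate signed measure
orthogonal to low degree. `exists_weights` provides it, on the nodes `1` and `21 i²`, from a finite
difference of order `2m` with `m` of order `√n`.

Let `μ, ν` be such a pair for `N`, with threshold `D`, and `μ', ν'` one for `M`, with threshold `D'`.
Drawing block `i` from `μ` or `ν` according to bit `i` turns `p` into a function `q` of `M` bits, and each
monomial of `p` depends only on the bits of blocks in which it has degree at least `D`, so at most `d / D`
of them. If `d < D * D'`, then `μ'` and `ν'` give `q` the same mean (`DualPair.mean_mixMean_eq`). But the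
error of `ν` is one-sided: with all blocks from `ν` the tree is certainly true, and with some block from
`μ` it is false with probability at least `5/6`. So `q` is negative at the point carrying most of `μ'` and
at least `1/3` on the support of `ν'`, and the means differ (`mul_le_totalDegree`). Hence
`d ≥ D * D' ≥ √(M N) / 21`.
-/

/-- The `ε`-approximate degree of a function on the Boolean cube `{-1,1}^ι`. -/
noncomputable def approxDeg {ι : Type} [Fintype ι] (f : (ι → ℝ) → ℝ) (ε : ℝ) : ℕ :=
  sInf {d : ℕ | ∃ p : MvPolynomial ι ℝ, p.totalDegree ≤ d ∧
    ∀ x : ι → ℝ, (∀ i, x i = 1 ∨ x i = -1) → |MvPolynomial.eval x p - f x| ≤ ε}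

/- The two-level AND-OR tree `AND_M ∘ OR_N` on `{-1,1}^{M·N}`:
outputs `-1` (true) iff every block contains a `-1`. -/
open Classical in
noncomputable def andOr (M N : ℕ) : ((Fin M × Fin N) → ℝ) → ℝ :=
  fun x => if ∀ i : Fin M, ∃ j : Fin N, x (i, j) = -1 then -1 else 1

open Finset

/-! ### Univariate dual weights -/

/-- Support points of the univariate dual weights: `21 i²` for `i = r - m ∈ {-m, …, m}`. Indexing by
`r` rather than `|i|` makes each positive node occur twice, as in a finite difference of order `2m`. -/
def dualNode (m r : ℕ) : ℕ := 21 * ((r : ℤ) - m).natAbs ^ 2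

theorem dualNode_cast (m r : ℕ) : (dualNode m r : ℝ) = 21 * ((r : ℝ) - m) ^ 2 := by
  simp [dualNode, Nat.cast_natAbs, sq_abs]

/-- Telescoping bound; at `k = 0` the right-hand side is `2` because `0⁻¹ = 0`. -/
theorem sum_inv_sq_le (k : ℕ) : ∑ x ∈ range k, (((x : ℝ) + 1) ^ 2)⁻¹ ≤ 2 - (k : ℝ)⁻¹ := by
  induction k with
  | zero => norm_num
  | succ k ih =>
    rw [sum_range_succ]
    rcases Nat.eq_zero_or_pos k with rfl | hk
    · norm_num
    · have hk' : (0 : ℝ) < k := by exact_mod_cast hk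
      have : (((k : ℝ) + 1) ^ 2)⁻¹ ≤ (k : ℝ)⁻¹ - ((k : ℝ) + 1)⁻¹ := by
        have e : (k : ℝ)⁻¹ - ((k : ℝ) + 1)⁻¹ = ((k : ℝ) * (k + 1))⁻¹ := by field_simp; ring
        rw [e]
        apply inv_anti₀ (by positivity)
        nlinarith
      push_cast
      linarith

theorem sum_inv_sq_centered_le (m : ℕ) :
    ∑ r ∈ range (2 * m + 1), (((r : ℝ) - m) ^ 2)⁻¹ ≤ 4 := by
  have h2 : ∀ k : ℕ, ∑ x ∈ range k, (((x : ℝ) + 1) ^ 2)⁻¹ ≤ 2 := fun k =>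
    (sum_inv_sq_le k).trans (by linarith [inv_nonneg.2 (Nat.cast_nonneg (α := ℝ) k)])
  rw [show 2 * m + 1 = m + (m + 1) by ring, sum_range_add, sum_range_succ', ← sum_range_reflect]
  have e1 : ∑ j ∈ range m, ((((m - 1 - j : ℕ) : ℝ) - m) ^ 2)⁻¹
      = ∑ x ∈ range m, (((x : ℝ) + 1) ^ 2)⁻¹ := by
    refine sum_congr rfl fun j hj => ?_
    have hj := mem_range.1 hj
    have : ((m - 1 - j : ℕ) : ℝ) = m - (j + 1) := by
      rw [Nat.sub_sub, Nat.cast_sub (by omega)]; push_cast; ring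
    rw [this]; congr 1; ring
  have e2 : ∑ j ∈ range m, ((((m + (j + 1) : ℕ) : ℝ) - m) ^ 2)⁻¹
      = ∑ x ∈ range m, (((x : ℝ) + 1) ^ 2)⁻¹ := by
    refine sum_congr rfl fun j hj => ?_
    push_cast; congr 1; ring
  rw [e1, e2]
  have := h2 m
  simp
  linarith

/-- The `n`-th finite difference at `0` kills polynomials of degree less than `n`. -/
theorem sum_alternating_choose_eval (n : ℕ) (Q : Polynomial ℝ) (hQ : Q.natDegree < n) :
    ∑ r ∈ range (n + 1), (-1 : ℝ) ^ r * n.choose r * Q.eval (r : ℝ) = 0 := by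
  have h := congrFun (Polynomial.fwdDiff_iter_eq_zero_of_degree_lt hQ) 0
  rw [fwdDiff_iter_eq_sum_shift] at h
  have h' : (-1 : ℝ) ^ n * ∑ r ∈ range (n + 1), (-1 : ℝ) ^ (n - r) * n.choose r * Q.eval (r : ℝ)
      = 0 := by
    have : ∑ r ∈ range (n + 1), (-1 : ℝ) ^ (n - r) * n.choose r * Q.eval (r : ℝ) = 0 := by
      simpa [zsmul_eq_mul] using h
    rw [this, mul_zero]
  rw [← h', mul_sum]
  refine sum_congr rfl fun r hr => ?_
  have hr : r ≤ n := Nat.lt_succ_iff.1 (mem_range.1 hr)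
  have : (-1 : ℝ) ^ r = (-1) ^ n * (-1) ^ (n - r) := by
    rw [← pow_add, show n + (n - r) = 2 * (n - r) + r by omega, pow_add, pow_mul]; simp
  rw [this]; ring

/-- Univariate dual object. The functional `P ↦ ∑ u r * P (21 (r - m)²) - (∑ u r) * P 1` annihilates
degree at most `m`, has coefficient `1` at the node `0` and total mass at most `1 / 5` on the other
nodes `21 i²`. It is the `2m`-th finite difference applied to `(P (21 i²) - P 1) / (21 i² - 1)`, a
polynomial in `i` of degree at most `2m - 2`; the denominator makes the coefficients summable. -/
theorem exists_weights (m : ℕ) : ∃ u : ℕ → ℝ, u m = 1 ∧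
    ∑ r ∈ (range (2 * m + 1)).erase m, |u r| ≤ 1 / 5 ∧
    ∀ P : Polynomial ℝ, P.natDegree ≤ m →
      ∑ r ∈ range (2 * m + 1), u r * (P.eval (dualNode m r : ℝ) - P.eval 1) = 0 := by
  have hcb : (0 : ℝ) < m.centralBinom := by exact_mod_cast m.centralBinom_pos
  have hne : ∀ r, (dualNode m r : ℝ) - 1 ≠ 0 := by
    intro r h
    have : dualNode m r = 1 := by exact_mod_cast sub_eq_zero.1 h
    unfold dualNode at this; omega
  -- The prefactor normalizes the coefficient at `r = m`, where the node is `0` and the denominator `-1`.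
  refine ⟨fun r => -(-1) ^ m / m.centralBinom * ((-1) ^ r * (2 * m).choose r)
    / ((dualNode m r : ℝ) - 1), ?_, ?_, ?_⟩
  · have e : ((2 * m).choose m : ℝ) = m.centralBinom := rfl
    simp only [dualNode_cast]
    have h1 : ((-1 : ℝ) ^ m) * (-1) ^ m = 1 := by rw [← mul_pow]; simp
    calc _ = ((-1 : ℝ) ^ m) * (-1) ^ m * (m.centralBinom / m.centralBinom) := by
          rw [e, sub_self]; ring
      _ = 1 := by rw [h1, div_self hcb.ne', one_mul]
  · calc _ ≤ ∑ r ∈ (range (2 * m + 1)).erase m, (1 / 20) * (((r : ℝ) - m) ^ 2)⁻¹ := by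
          refine sum_le_sum fun r hr => ?_
          have hr : r ≠ m := (mem_erase.1 hr).1
          have h1 : (1 : ℝ) ≤ ((r : ℝ) - m) ^ 2 := by
            have : (1 : ℤ) ≤ ((r : ℤ) - m) ^ 2 := by
              have : (r : ℤ) - m ≠ 0 := by omega
              have := sq_pos_of_ne_zero this
              omega
            exact_mod_cast this
          have hc : ((2 * m).choose r : ℝ) ≤ m.centralBinom := by
            exact_mod_cast Nat.choose_le_centralBinom r m
          simp only [dualNode_cast]
          have hpos : (0 : ℝ) < 21 * ((r : ℝ) - m) ^ 2 - 1 := by linarith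
          rw [abs_div, abs_mul, abs_div, abs_mul, abs_neg, abs_pow, abs_pow, abs_neg, abs_one,
            one_pow, one_pow, abs_of_pos hcb, abs_of_pos hpos, Nat.abs_cast, one_mul,
            one_div_mul_eq_div]
          calc _ ≤ 1 / (21 * ((r : ℝ) - m) ^ 2 - 1) := by
                gcongr
                exact (div_le_one hcb).2 hc
            _ ≤ 1 / (20 * ((r : ℝ) - m) ^ 2) := by
                apply one_div_le_one_div_of_le <;> linarith
            _ = _ := by rw [one_div, mul_inv]; norm_num
      -- The term `r = m` may be put back, since there `0⁻¹ = 0`.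
      _ ≤ ∑ r ∈ range (2 * m + 1), (1 / 20) * (((r : ℝ) - m) ^ 2)⁻¹ :=
          sum_le_sum_of_subset_of_nonneg (erase_subset _ _) fun _ _ _ => by positivity
      _ ≤ _ := by
          rw [← mul_sum]; linarith [sum_inv_sq_centered_le m]
  · intro P hP
    obtain ⟨R, hR⟩ := Polynomial.X_sub_C_dvd_sub_C_eval (a := (1 : ℝ)) (p := P)
    have hev : ∀ t : ℝ, P.eval t - P.eval 1 = (t - 1) * R.eval t := by
      intro t
      have := congrArg (Polynomial.eval t) hR
      simpa using this
    have hsum : ∑ r ∈ range (2 * m + 1), (-1 : ℝ) ^ r * (2 * m).choose r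
        * R.eval (dualNode m r : ℝ) = 0 := by
      -- Separating `R = 0` also covers `m = 0`, where the degree bound below would fail.
      by_cases hR0 : R = 0
      · simp [hR0]
      have hd : R.natDegree + 1 ≤ m := by
        have := congrArg Polynomial.natDegree hR
        rw [Polynomial.natDegree_sub_C, Polynomial.natDegree_mul (Polynomial.X_sub_C_ne_zero _) hR0,
          Polynomial.natDegree_X_sub_C] at this
        omega
      set G : Polynomial ℝ := Polynomial.C 21 * (Polynomial.X - Polynomial.C (m : ℝ)) ^ 2
      have hG : G.natDegree ≤ 2 := by
        refine (Polynomial.natDegree_C_mul_le _ _).trans ?_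
        refine Polynomial.natDegree_pow_le.trans ?_
        rw [Polynomial.natDegree_X_sub_C]
      have := sum_alternating_choose_eval (2 * m) (R.comp G) (by
        rw [Polynomial.natDegree_comp]; nlinarith)
      simpa [G, dualNode_cast] using this
    have : ∀ r ∈ range (2 * m + 1), -(-1 : ℝ) ^ m / m.centralBinom * ((-1) ^ r * (2 * m).choose r)
        / ((dualNode m r : ℝ) - 1) * (P.eval (dualNode m r : ℝ) - P.eval 1)
        = -(-1 : ℝ) ^ m / m.centralBinom * ((-1 : ℝ) ^ r * (2 * m).choose r
        * R.eval (dualNode m r : ℝ)) := by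
      intro r _
      rw [hev]
      have := hne r
      field_simp
    rw [sum_congr rfl this, ← mul_sum, hsum, mul_zero]

/-! ### Dual pairs of distributions for `OR` -/

section dual

variable {ι : Type} [Fintype ι]

/-- The uniform distribution on the `k`-element subsets of `ι` (for `k ≤ |ι|`). A subset stands for
the point of the cube whose `-1` coordinates are its elements. -/
noncomputable def sliceWeight (k : ℕ) (T : Finset ι) : ℝ :=
  if #T = k then ((Fintype.card ι).choose k : ℝ)⁻¹ else 0

theorem slice_nonneg (k : ℕ) (T : Finset ι) : 0 ≤ sliceWeight k T := by
  unfold sliceWeight; split_ifs <;> positivity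

variable [DecidableEq ι]

/-- Symmetrization of Minsky and Papert, one monomial at a time: a uniformly random `k`-subset contains
a fixed `S` with probability `C(k, |S|) / C(n, |S|)`, which is a polynomial in `k` of degree `|S|`. -/
theorem sum_slice_superset {k : ℕ} (hk : k ≤ Fintype.card ι) (S : Finset ι) :
    ∑ T : Finset ι, sliceWeight k T * (if S ⊆ T then 1 else 0)
      = (k.choose #S : ℝ) / (Fintype.card ι).choose #S := by
  have hc : ((Fintype.card ι).choose k : ℝ) ≠ 0 := by
    exact_mod_cast (Nat.choose_pos hk).ne'
  have hs : ((Fintype.card ι).choose #S : ℝ) ≠ 0 := by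
    exact_mod_cast (Nat.choose_pos (card_le_univ S)).ne'
  have e : ∑ T : Finset ι, sliceWeight k T * (if S ⊆ T then 1 else 0)
      = ((Fintype.card ι).choose k : ℝ)⁻¹ * #{T ∈ powersetCard k (univ : Finset ι) | S ⊆ T} := by
    rw [card_filter, Nat.cast_sum, mul_sum, powersetCard_eq_filter, powerset_univ, sum_filter]
    refine sum_congr rfl fun T _ => ?_
    unfold sliceWeight
    split_ifs <;> simp
  rw [e]
  rcases le_or_gt #S k with h | h
  · rw [card_filter_powersetCard_subset _ _ _ (subset_univ S) h, card_univ]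
    have := Nat.choose_mul (n := Fintype.card ι) h
    have : ((Fintype.card ι).choose k : ℝ) * k.choose #S
        = (Fintype.card ι).choose #S * (Fintype.card ι - #S).choose (k - #S) := by
      exact_mod_cast this
    field_simp
    linarith
  · rw [Nat.choose_eq_zero_of_lt h, filter_false_of_mem]
    · simp
    · intro T hT hST
      have := card_le_card hST
      rw [(mem_powersetCard.1 hT).2] at this
      omega

theorem sum_slice {k : ℕ} (hk : k ≤ Fintype.card ι) : ∑ T : Finset ι, sliceWeight k T = 1 := by
  simpa using sum_slice_superset hk (∅ : Finset ι)

/-- A signed measure annihilating all monotone conjunctions of fewer than `D` variables annihilates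
every product of one-variable functions of fewer than `D` variables. -/
theorem sum_mul_prod_eq_zero {D : ℕ} (w : Finset ι → ℝ)
    (hw : ∀ S : Finset ι, #S < D → ∑ T, w T * (if S ⊆ T then 1 else 0) = 0)
    {A : Finset ι} (hA : #A < D) (F : ι → Bool → ℝ) :
    ∑ T, w T * ∏ i ∈ A, F i (decide (i ∈ T)) = 0 := by
  have e : ∀ T : Finset ι, ∏ i ∈ A, F i (decide (i ∈ T)) = ∑ S ∈ A.powerset,
      ((∏ i ∈ S, (F i true - F i false)) * ∏ i ∈ A \ S, F i false)
        * (if S ⊆ T then 1 else 0) := by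
    intro T
    have : ∀ i ∈ A, F i (decide (i ∈ T))
        = (if i ∈ T then F i true - F i false else 0) + F i false := by
      intro i _
      by_cases h : i ∈ T <;> simp [h]
    rw [prod_congr rfl this, prod_add]
    refine sum_congr rfl fun S _ => ?_
    rw [prod_ite_zero]
    by_cases h : S ⊆ T
    · rw [if_pos h, if_pos (fun i hi => h hi), mul_one]
    · rw [if_neg h, if_neg (fun h' => h fun i hi => h' i hi)]; ring
  simp_rw [e, mul_sum]
  rw [sum_comm]
  refine sum_eq_zero fun S hS => ?_
  have := hw S ((card_le_card (mem_powerset.1 hS)).trans_lt hA)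
  calc _ = ((∏ i ∈ S, (F i true - F i false)) * ∏ i ∈ A \ S, F i false)
        * ∑ T, w T * (if S ⊆ T then 1 else 0) := by
        rw [mul_sum]; exact sum_congr rfl fun T _ => by ring
    _ = 0 := by rw [this, mul_zero]

/-- Two probability distributions `μ`, `ν` on subsets of `ι` that no function of degree less than `D`
can tell apart, although `μ` has mass at least `5 / 6` at `∅` and `ν` has none: the normalized positive
and negative parts of a one-sided dual polynomial for `OR`. Degree is tested on products of
one-variable functions, so the choice of coding for the two bit values is irrelevant. -/
structure DualPair (D : ℕ) (μ ν : Finset ι → ℝ) : Prop where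
  left_nonneg : ∀ T, 0 ≤ μ T
  right_nonneg : ∀ T, 0 ≤ ν T
  left_sum : ∑ T, μ T = 1
  right_sum : ∑ T, ν T = 1
  left_empty : 5 / 6 ≤ μ ∅
  right_empty : ν ∅ = 0
  agree : ∀ A : Finset ι, #A < D → ∀ F : ι → Bool → ℝ,
    ∑ T, μ T * ∏ i ∈ A, F i (decide (i ∈ T)) = ∑ T, ν T * ∏ i ∈ A, F i (decide (i ∈ T))

/-- Dual form of the lower bound `√n` (up to a constant) for the approximate degree of `OR` on `n` variables. -/
theorem exists_dualPair (hn : 0 < Fintype.card ι) :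
    ∃ (D : ℕ) (μ ν : Finset ι → ℝ), Fintype.card ι ≤ 21 * D ^ 2 ∧ DualPair D μ ν := by
  set n := Fintype.card ι with hn_def
  set m := Nat.sqrt (n / 21) with hm
  have hm1 : 21 * m ^ 2 ≤ n := by
    have := Nat.sqrt_le' (n / 21)
    rw [← hm] at this; omega
  have hm2 : n ≤ 21 * (m + 1) ^ 2 := by
    have := Nat.lt_succ_sqrt' (n / 21)
    rw [← hm, Nat.succ_eq_add_one] at this; omega
  obtain ⟨u, hum, hu, hP⟩ := exists_weights m
  set R := range (2 * m + 1) with hR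
  have hmR : m ∈ R := by rw [hR, mem_range]; omega
  have hnode : ∀ r ∈ R, dualNode m r ≤ n := by
    intro r hr
    rw [hR, mem_range] at hr
    have : ((r : ℤ) - m).natAbs ≤ m := by omega
    exact (Nat.mul_le_mul_left 21 (Nat.pow_le_pow_left this 2)).trans hm1
  set Z := ∑ r ∈ R, max (u r) 0 with hZ
  set s := ∑ r ∈ R, u r with hs
  have hmax : ∀ r, max (u r) 0 - max (-u r) 0 = u r := fun r => by
    rcases le_total (u r) 0 with h | h
    · rw [max_eq_right h, max_eq_left (by linarith)]; ring
    · rw [max_eq_left h, max_eq_right (by linarith)]; ring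
  have hs0 : 0 ≤ s := by
    rw [hs, ← add_sum_erase R u hmR, hum]
    have := neg_le_of_abs_le ((abs_sum_le_sum_abs u (R.erase m)).trans hu)
    linarith
  have hZ1 : 1 ≤ Z := by
    rw [hZ, ← add_sum_erase R _ hmR, hum]
    have : 0 ≤ ∑ r ∈ R.erase m, max (u r) 0 := sum_nonneg fun r _ => le_max_right _ _
    norm_num
    linarith
  have hZ2 : Z ≤ 6 / 5 := by
    rw [hZ, ← add_sum_erase R _ hmR, hum]
    have : ∑ r ∈ R.erase m, max (u r) 0 ≤ ∑ r ∈ R.erase m, |u r| :=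
      sum_le_sum fun r _ => max_le (le_abs_self _) (abs_nonneg _)
    norm_num
    linarith
  have hZ0 : 0 < Z := by linarith
  have hZs : ∑ r ∈ R, max (-u r) 0 + s = Z := by
    rw [hs, hZ, ← sum_add_distrib]
    exact sum_congr rfl fun r _ => by linarith [hmax r]
  have hslice : ∀ f : ℕ → ℝ, ∑ T : Finset ι, ∑ r ∈ R, f r * sliceWeight (dualNode m r) T
      = ∑ r ∈ R, f r := by
    intro f
    rw [sum_comm]
    refine sum_congr rfl fun r hr => ?_
    rw [← mul_sum, sum_slice (hnode r hr), mul_one]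
  have hnode_m : dualNode m m = 0 := by simp [dualNode]
  have hslice_m : sliceWeight (dualNode m m) (∅ : Finset ι) = 1 := by rw [hnode_m]; simp [sliceWeight]
  have hslice_ne : ∀ r, r ≠ m → sliceWeight (dualNode m r) (∅ : Finset ι) = 0 := by
    intro r hr
    have h1 : ((r : ℤ) - m).natAbs ≠ 0 := by omega
    have h2 : dualNode m r ≠ 0 := by unfold dualNode; positivity
    simp [sliceWeight, h2.symm]
  have hslice_empty : ∀ f : ℕ → ℝ, ∑ r ∈ R, f r * sliceWeight (dualNode m r) (∅ : Finset ι) = f m := by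
    intro f
    rw [sum_eq_single_of_mem m hmR, hslice_m, mul_one]
    intro r _ hr
    rw [hslice_ne r hr, mul_zero]
  -- The negative mass `-s` at the node `1` goes to `ν`.
  refine ⟨m + 1, fun T => (∑ r ∈ R, max (u r) 0 * sliceWeight (dualNode m r) T) / Z,
    fun T => (∑ r ∈ R, max (-u r) 0 * sliceWeight (dualNode m r) T + s * sliceWeight 1 T) / Z, hm2, ?_⟩
  constructor
  · intro T
    exact div_nonneg (sum_nonneg fun r _ => mul_nonneg (le_max_right _ _) (slice_nonneg _ _)) hZ0.le
  · intro T
    exact div_nonneg (add_nonneg (sum_nonneg fun r _ =>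
      mul_nonneg (le_max_right _ _) (slice_nonneg _ _)) (mul_nonneg hs0 (slice_nonneg _ _))) hZ0.le
  · rw [← sum_div, hslice, div_self hZ0.ne']
  · rw [← sum_div, sum_add_distrib, hslice, ← mul_sum, sum_slice hn, mul_one, hZs,
      div_self hZ0.ne']
  · rw [hslice_empty fun r => max (u r) 0, hum, le_div_iff₀ hZ0]
    norm_num
    linarith
  · rw [hslice_empty fun r => max (-u r) 0, hum]
    simp [sliceWeight]
  · intro A hA F
    rw [← sub_eq_zero, ← sum_sub_distrib]
    simp_rw [← sub_mul]
    refine sum_mul_prod_eq_zero (D := m + 1) _ ?_ hA F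
    intro S hS
    have key : ∀ T : Finset ι, (∑ r ∈ R, max (u r) 0 * sliceWeight (dualNode m r) T) / Z
        - (∑ r ∈ R, max (-u r) 0 * sliceWeight (dualNode m r) T + s * sliceWeight 1 T) / Z
        = Z⁻¹ * ∑ r ∈ R, u r * (sliceWeight (dualNode m r) T - sliceWeight 1 T) := by
      intro T
      have : ∑ r ∈ R, u r * (sliceWeight (dualNode m r) T - sliceWeight 1 T)
          = ∑ r ∈ R, max (u r) 0 * sliceWeight (dualNode m r) T
          - (∑ r ∈ R, max (-u r) 0 * sliceWeight (dualNode m r) T + s * sliceWeight 1 T) := by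
        rw [hs, sum_mul, ← sum_add_distrib, ← sum_sub_distrib]
        refine sum_congr rfl fun r _ => ?_
        linear_combination -(sliceWeight (dualNode m r) T) * hmax r
      rw [this]; ring
    -- On the conjunction over `S`, slice averages are values of a polynomial of degree `|S| ≤ m`.
    have hd := hP (descPochhammer ℝ #S) (by rw [descPochhammer_natDegree]; omega)
    have hch : ∀ k : ℕ, (descPochhammer ℝ #S).eval (k : ℝ) = (k.choose #S : ℝ) * (#S).factorial := by
      intro k
      rw [Nat.cast_choose_eq_descPochhammer_div]
      have : ((#S).factorial : ℝ) ≠ 0 := by exact_mod_cast (#S).factorial_ne_zero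
      field_simp
    have h1 : (descPochhammer ℝ #S).eval (1 : ℝ) = (Nat.choose 1 #S : ℝ) * (#S).factorial := by
      exact_mod_cast hch 1
    have hfac : ((#S).factorial : ℝ) ≠ 0 := by exact_mod_cast (#S).factorial_ne_zero
    have hd' : ∑ r ∈ R, u r * (((dualNode m r).choose #S : ℝ) - Nat.choose 1 #S) = 0 := by
      refine mul_right_cancel₀ hfac ?_
      rw [zero_mul, ← hd, sum_mul]
      refine sum_congr rfl fun r _ => ?_
      rw [hch, h1]; ring
    calc _ = Z⁻¹ * ∑ r ∈ R, u r * (∑ T : Finset ι, sliceWeight (dualNode m r) T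
              * (if S ⊆ T then 1 else 0) - ∑ T : Finset ι, sliceWeight 1 T * (if S ⊆ T then 1 else 0)) := by
          simp_rw [key, mul_assoc, ← mul_sum, sum_mul]
          rw [sum_comm]
          congr 1
          refine sum_congr rfl fun r _ => ?_
          rw [← sum_sub_distrib, mul_sum]
          exact sum_congr rfl fun T _ => by ring
      _ = Z⁻¹ * ((∑ r ∈ R, u r * (((dualNode m r).choose #S : ℝ) - Nat.choose 1 #S))
            / (n.choose #S)) := by
          rw [sum_div]
          congr 1
          refine sum_congr rfl fun r hr => ?_
          rw [sum_slice_superset (hnode r hr), sum_slice_superset hn]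
          ring
      _ = 0 := by rw [hd']; simp

end dual

/-! ### Composition -/

/-- The point of `{-1,1}^(α × β)` whose `-1` coordinates in block `i` are the elements of `y i`. -/
def signPoint {α β : Type} [DecidableEq β] (y : α → Finset β) : α × β → ℝ :=
  fun ij => if ij.2 ∈ y ij.1 then -1 else 1

theorem signPoint_cube {α β : Type} [DecidableEq β] (y : α → Finset β) (ij : α × β) :
    signPoint y ij = 1 ∨ signPoint y ij = -1 := by
  unfold signPoint; split_ifs <;> simp

section composition

variable {α β : Type} [Fintype α] [DecidableEq α] [Fintype β]

/-- The product distribution on inputs in which block `i` is drawn from `μ` if `i ∈ S` and from `ν`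
otherwise. As `μ` is mostly the all-`1` block and `ν` avoids it, `S` is approximately the set of blocks
with `OR` equal to `1`. The Boolean test matches the form in which `DualPair.agree` is stated. -/
def mixWeight (μ ν : Finset β → ℝ) (S : Finset α) (y : α → Finset β) : ℝ :=
  ∏ i, (if decide (i ∈ S) = true then μ else ν) (y i)

theorem sum_prod_apply (g : α → Finset β → ℝ) :
    ∑ y : α → Finset β, ∏ i, g i (y i) = ∏ i, ∑ T, g i T := by
  rw [prod_univ_sum, Fintype.piFinset_univ]

variable [DecidableEq β]

/-- The mean of `f` over inputs drawn from `mixWeight μ ν S`, as a function of `S`. -/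
noncomputable def mixMean (μ ν : Finset β → ℝ) (f : (α × β → ℝ) → ℝ) (S : Finset α) : ℝ :=
  ∑ y : α → Finset β, mixWeight μ ν S y * f (signPoint y)

/-- The two distributions give the same mean to each monomial of degree less than `D` in `±1` variables. -/
theorem DualPair.mean_monomial_eq {D : ℕ} {μ ν : Finset β → ℝ} (h : DualPair D μ ν)
    (e : β → ℕ) (he : ∑ j, e j < D) :
    ∑ T, μ T * ∏ j, (if j ∈ T then (-1 : ℝ) else 1) ^ e j
      = ∑ T, ν T * ∏ j, (if j ∈ T then (-1 : ℝ) else 1) ^ e j := by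
  set A : Finset β := {j | e j ≠ 0} with hA
  have hcard : #A < D := by
    refine lt_of_le_of_lt ?_ he
    rw [card_eq_sum_ones]
    refine (sum_le_sum (f := fun _ => 1) (g := e) fun j hj => ?_).trans
      (sum_le_sum_of_subset (subset_univ A))
    exact Nat.one_le_iff_ne_zero.2 (mem_filter.1 hj).2
  have hp : ∀ T : Finset β, ∏ j, (if j ∈ T then (-1 : ℝ) else 1) ^ e j
      = ∏ j ∈ A, (fun (j : β) (b : Bool) => (if b = true then (-1 : ℝ) else 1) ^ e j) j
        (decide (j ∈ T)) := by
    intro T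
    simp only [decide_eq_true_eq]
    refine (prod_subset (subset_univ A) fun j _ hj => ?_).symm
    have : e j = 0 := by simpa [hA] using hj
    rw [this, pow_zero]
  simp_rw [hp]
  exact h.agree A hcard fun j b => (if b = true then (-1 : ℝ) else 1) ^ e j

/-- Degree drop under averaging. On a monomial, the block means factor, and a block in which the
monomial has degree less than `D` contributes a constant. Hence `S ↦ mixMean μ ν p S` has degree at most
`deg p / D` in the outer variables, and the outer pair gives it equal means. -/
theorem DualPair.mean_mixMean_eq {D D' : ℕ} {μ ν : Finset β → ℝ} {μ' ν' : Finset α → ℝ}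
    (h : DualPair D μ ν) (h' : DualPair D' μ' ν') (p : MvPolynomial (α × β) ℝ)
    (hp : p.totalDegree < D * D') :
    ∑ S, μ' S * mixMean μ ν (fun x => MvPolynomial.eval x p) S
      = ∑ S, ν' S * mixMean μ ν (fun x => MvPolynomial.eval x p) S := by
  let G : (α × β →₀ ℕ) → α → Bool → ℝ := fun e i b =>
    ∑ T, (if b = true then μ else ν) T * ∏ j, (if j ∈ T then (-1 : ℝ) else 1) ^ e (i, j)
  have hq : ∀ S : Finset α, mixMean μ ν (fun x => MvPolynomial.eval x p) S
      = ∑ e ∈ p.support, p.coeff e * ∏ i, G e i (decide (i ∈ S)) := by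
    intro S
    simp only [mixMean, MvPolynomial.eval_eq', mul_sum]
    rw [sum_comm]
    refine sum_congr rfl fun e _ => ?_
    simp only [G]
    rw [← sum_prod_apply, mul_sum]
    refine sum_congr rfl fun y _ => ?_
    rw [prod_mul_distrib, Fintype.prod_prod_type]
    simp only [mixWeight, signPoint]
    ring
  simp_rw [hq, mul_sum]
  rw [sum_comm, sum_comm (s := univ)]
  refine sum_congr rfl fun e he => ?_
  -- The blocks in which the monomial `e` has large degree.
  set A : Finset α := {i | D ≤ ∑ j, e (i, j)} with hA
  have hcard : #A < D' := by
    have h1 : ∑ i, ∑ j, e (i, j) ≤ p.totalDegree := by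
      have := MvPolynomial.le_totalDegree he
      rwa [Finsupp.sum_fintype _ _ (fun _ => rfl), Fintype.sum_prod_type] at this
    have h2 : #A * D ≤ ∑ i, ∑ j, e (i, j) := by
      rw [← smul_eq_mul]
      exact (card_nsmul_le_sum A _ D fun i hi => (mem_filter.1 hi).2).trans
        (sum_le_sum_of_subset (subset_univ A))
    have : #A * D < D' * D := by rw [mul_comm D' D]; omega
    exact lt_of_mul_lt_mul_right this (Nat.zero_le D)
  have hG : ∀ S : Finset α, ∏ i, G e i (decide (i ∈ S))
      = (∏ i ∈ univ \ A, G e i true) * ∏ i ∈ A, G e i (decide (i ∈ S)) := by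
    intro S
    rw [← prod_sdiff (subset_univ A)]
    congr 1
    refine prod_congr rfl fun i hi => ?_
    have hi : ∑ j, e (i, j) < D := by simpa [hA] using hi
    have := h.mean_monomial_eq (fun j => e (i, j)) hi
    cases hb : decide (i ∈ S)
    · simpa [G] using this.symm
    · rfl
  have hag := h'.agree A hcard (G e)
  calc _ = (p.coeff e * ∏ i ∈ univ \ A, G e i true)
          * ∑ S, μ' S * ∏ i ∈ A, G e i (decide (i ∈ S)) := by
        rw [mul_sum]; exact sum_congr rfl fun S _ => by rw [hG]; ring
    _ = _ := by
        rw [hag, mul_sum]; exact sum_congr rfl fun S _ => by rw [hG]; ring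

section bounds

variable {D : ℕ} {μ ν : Finset β → ℝ}

theorem DualPair.mixWeight_nonneg (h : DualPair D μ ν) (S : Finset α) (y : α → Finset β) :
    0 ≤ mixWeight μ ν S y := by
  refine prod_nonneg fun i _ => ?_
  split_ifs
  · exact h.left_nonneg _
  · exact h.right_nonneg _

theorem DualPair.sum_mixWeight (h : DualPair D μ ν) (S : Finset α) :
    ∑ y : α → Finset β, mixWeight μ ν S y = 1 := by
  unfold mixWeight
  rw [sum_prod_apply]
  refine prod_eq_one fun i _ => ?_
  split_ifs
  · exact h.left_sum
  · exact h.right_sum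

theorem DualPair.sum_mixWeight_empty (h : DualPair D μ ν) {S : Finset α} {i : α} (hi : i ∈ S) :
    ∑ y : α → Finset β, mixWeight μ ν S y * (if y i = ∅ then 1 else 0) = μ ∅ := by
  have e : ∀ y : α → Finset β, mixWeight μ ν S y * (if y i = ∅ then 1 else 0)
      = ∏ j, (if decide (j ∈ S) = true then μ else ν) (y j)
        * (if j = i then (if y j = ∅ then 1 else 0) else 1) := by
    intro y
    rw [prod_mul_distrib, prod_ite_eq' univ i]
    simp [mixWeight]
  rw [sum_congr rfl fun y _ => e y, sum_prod_apply (g := fun j T =>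
    (if decide (j ∈ S) = true then μ else ν) T * (if j = i then (if T = ∅ then 1 else 0) else 1)),
    prod_eq_single i]
  · simp [hi]
  · intro j _ hj
    simp only [if_neg hj, mul_one]
    split_ifs
    · exact h.left_sum
    · exact h.right_sum
  · simp

end bounds

end composition

theorem andOr_signPoint {M N : ℕ} (y : Fin M → Finset (Fin N)) :
    andOr M N (signPoint y) = if ∀ i, y i ≠ ∅ then -1 else 1 := by
  have : ∀ i : Fin M, (∃ j, signPoint y (i, j) = -1) ↔ y i ≠ ∅ := by
    intro i
    rw [← nonempty_iff_ne_empty]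
    refine exists_congr fun j => ?_
    by_cases h : j ∈ y i <;> (simp [signPoint, h]; try norm_num)
  unfold andOr
  simp only [this]

/-- The averaged polynomial `q S` is at most `-2/3` at `S = ∅` (all blocks are nonzero with certainty),
at least `1/3` for other `S` (some block is all-`1` with probability at least `5/6`), and at most `4/3`
throughout. The outer pair, which nearly separates `S = ∅` from the rest, then gives `q` means of
opposite sign. -/
theorem mul_le_totalDegree {M N D D' : ℕ} {μ ν : Finset (Fin N) → ℝ} {μ' ν' : Finset (Fin M) → ℝ}
    (h : DualPair D μ ν) (h' : DualPair D' μ' ν') (p : MvPolynomial (Fin M × Fin N) ℝ)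
    (hp : ∀ x : Fin M × Fin N → ℝ, (∀ i, x i = 1 ∨ x i = -1) →
      |MvPolynomial.eval x p - andOr M N x| ≤ 1 / 3) :
    D * D' ≤ p.totalDegree := by
  by_contra! hlt
  have heq := h.mean_mixMean_eq h' p hlt
  set q := mixMean (α := Fin M) μ ν (fun x => MvPolynomial.eval x p) with hq
  have hpy : ∀ y : Fin M → Finset (Fin N), |MvPolynomial.eval (signPoint y) p
      - if ∀ i, y i ≠ ∅ then -1 else 1| ≤ 1 / 3 := fun y => by
    rw [← andOr_signPoint]; exact hp _ (signPoint_cube y)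
  have hup : ∀ y : Fin M → Finset (Fin N), MvPolynomial.eval (signPoint y) p ≤ 4 / 3 := fun y => by
    have := (abs_le.1 (hpy y)).2
    split_ifs at this <;> linarith
  have hlow : ∀ (y : Fin M → Finset (Fin N)) (i : Fin M),
      -(4 / 3) + 2 * (if y i = ∅ then 1 else 0) ≤ MvPolynomial.eval (signPoint y) p := fun y i => by
    have := (abs_le.1 (hpy y)).1
    by_cases hi : y i = ∅
    · rw [if_neg (fun hall => hall i hi)] at this
      rw [if_pos hi]; linarith
    · rw [if_neg hi]
      split_ifs at this <;> linarith
  have q_le : ∀ S, q S ≤ 4 / 3 := fun S => by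
    calc q S ≤ ∑ y : Fin M → Finset (Fin N), mixWeight μ ν S y * (4 / 3) :=
          sum_le_sum fun y _ => mul_le_mul_of_nonneg_left (hup y) (h.mixWeight_nonneg S y)
      _ = 4 / 3 := by rw [← sum_mul, h.sum_mixWeight, one_mul]
  have q_empty : q ∅ ≤ -(2 / 3) := by
    calc q ∅ ≤ ∑ y : Fin M → Finset (Fin N), mixWeight μ ν ∅ y * (-(2 / 3)) := by
          refine sum_le_sum fun y _ => ?_
          by_cases hy : ∀ i, y i ≠ ∅
          · refine mul_le_mul_of_nonneg_left ?_ (h.mixWeight_nonneg ∅ y)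
            have := (abs_le.1 (hpy y)).2
            rw [if_pos hy] at this
            linarith
          · push Not at hy
            obtain ⟨i, hi⟩ := hy
            have : mixWeight μ ν ∅ y = 0 :=
              prod_eq_zero (mem_univ i) (by simp [hi, h.right_empty])
            rw [this, zero_mul, zero_mul]
      _ = -(2 / 3) := by rw [← sum_mul, h.sum_mixWeight, one_mul]
  have q_ge : ∀ S, S ≠ ∅ → 1 / 3 ≤ q S := fun S hS => by
    obtain ⟨i, hi⟩ := nonempty_iff_ne_empty.2 hS
    calc (1 / 3 : ℝ) ≤ -(4 / 3) + 2 * μ ∅ := by linarith [h.left_empty]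
      _ = ∑ y : Fin M → Finset (Fin N), mixWeight μ ν S y
            * (-(4 / 3) + 2 * (if y i = ∅ then 1 else 0)) := by
          rw [← h.sum_mixWeight_empty hi]
          simp only [mul_add, sum_add_distrib, ← sum_mul, h.sum_mixWeight, one_mul]
          rw [mul_sum]
          congr 1
          exact sum_congr rfl fun y _ => by ring
      _ ≤ q S := sum_le_sum fun y _ =>
          mul_le_mul_of_nonneg_left (hlow y i) (h.mixWeight_nonneg S y)
  have hleft : ∑ S, μ' S * q S ≤ -(1 / 3) := by
    calc ∑ S, μ' S * q S ≤ ∑ S, (μ' S * (4 / 3) - if S = ∅ then 2 * μ' S else 0) := by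
          refine sum_le_sum fun S _ => ?_
          by_cases hS : S = ∅
          · subst hS
            have := mul_le_mul_of_nonneg_left q_empty (h'.left_nonneg ∅)
            rw [if_pos rfl]; linarith
          · rw [if_neg hS, sub_zero]
            exact mul_le_mul_of_nonneg_left (q_le S) (h'.left_nonneg S)
      _ = 4 / 3 - 2 * μ' ∅ := by
          rw [sum_sub_distrib, ← sum_mul, h'.left_sum, sum_ite_eq' univ]; simp
      _ ≤ _ := by linarith [h'.left_empty]
  have hright : 1 / 3 ≤ ∑ S, ν' S * q S := by
    calc (1 / 3 : ℝ) = ∑ S, ν' S * (1 / 3) := by rw [← sum_mul, h'.right_sum, one_mul]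
      _ ≤ _ := by
          refine sum_le_sum fun S _ => ?_
          by_cases hS : S = ∅
          · rw [hS, h'.right_empty, zero_mul, zero_mul]
          · exact mul_le_mul_of_nonneg_left (q_ge S hS) (h'.right_nonneg S)
  linarith

/-- Exact representability, so that the infimum defining `approxDeg` is over a nonempty set. -/
theorem exists_exact_polynomial (M N : ℕ) : ∃ p : MvPolynomial (Fin M × Fin N) ℝ,
    ∀ x : Fin M × Fin N → ℝ, (∀ i, x i = 1 ∨ x i = -1) →
      MvPolynomial.eval x p = andOr M N x := by
  refine ⟨1 - MvPolynomial.C 2 * ∏ i : Fin M, (1 - ∏ j : Fin N,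
    (MvPolynomial.C (1 / 2) * (1 + MvPolynomial.X (i, j)))), fun x hx => ?_⟩
  have h1 : ∀ i : Fin M, ∏ j : Fin N, (1 / 2 * (1 + x (i, j)))
      = if ∃ j, x (i, j) = -1 then 0 else 1 := by
    intro i
    split_ifs with h
    · obtain ⟨j, hj⟩ := h
      exact prod_eq_zero (mem_univ j) (by rw [hj]; norm_num)
    · push Not at h
      refine prod_eq_one fun j _ => ?_
      rw [(hx (i, j)).resolve_right (h j)]; norm_num
  simp only [map_sub, map_one, map_mul, MvPolynomial.eval_C, map_prod, map_add,
    MvPolynomial.eval_X, h1]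
  unfold andOr
  split_ifs with h
  · rw [prod_eq_one fun i _ => by rw [if_pos (h i)]; norm_num]; norm_num
  · push Not at h
    obtain ⟨i, hi⟩ := h
    rw [prod_eq_zero (mem_univ i) (by rw [if_neg (by simpa using hi)]; norm_num)]; norm_num

theorem stmt1 :
    ∃ c : ℝ, c > 0 ∧ ∀ M N : ℕ, 0 < M → 0 < N →
      (approxDeg (andOr M N) (1/3) : ℝ) ≥ c * Real.sqrt (M * N) := by
  refine ⟨1 / 21, by norm_num, fun M N hM hN => ?_⟩
  obtain ⟨D, μ, ν, hD, h⟩ := exists_dualPair (ι := Fin N) (by simpa using hN)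
  obtain ⟨D', μ', ν', hD', h'⟩ := exists_dualPair (ι := Fin M) (by simpa using hM)
  rw [Fintype.card_fin] at hD hD'
  have hdeg : D * D' ≤ approxDeg (andOr M N) (1 / 3) := by
    refine le_csInf ?_ ?_
    · obtain ⟨p, hp⟩ := exists_exact_polynomial M N
      exact ⟨p.totalDegree, p, le_rfl, fun x hx => by rw [hp x hx]; norm_num⟩
    · rintro d ⟨p, hpd, hp⟩
      exact (mul_le_totalDegree h h' p hp).trans hpd
  have hdeg' : (D : ℝ) * D' ≤ approxDeg (andOr M N) (1 / 3) := by exact_mod_cast hdeg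
  have hD1 : (N : ℝ) ≤ 21 * (D : ℝ) ^ 2 := by exact_mod_cast hD
  have hD1' : (M : ℝ) ≤ 21 * (D' : ℝ) ^ 2 := by exact_mod_cast hD'
  have hsqrt : Real.sqrt (M * N) ≤ 21 * (D * D') := by
    apply Real.sqrt_le_iff.2 ⟨by positivity, ?_⟩
    calc (M : ℝ) * N ≤ (21 * (D' : ℝ) ^ 2) * (21 * (D : ℝ) ^ 2) := by gcongr
      _ = _ := by ring
  linarith
end

section
/- Let F : {-1,1}^M → {-1,1} and f : {-1,1}^N → {-1,1} be Boolean functions, and let ε, δ > 0 be real numbers with ε − 4δ·bs(F) > 0. Then the composed function F(f,…,f) : {-1,1}^{M·N} → {-1,1}, whose value on (x_1,…,x_M) with each x_i ∈ {-1,1}^N is F(f(x_1),…,f(x_M)), satisfies deg_{ε − 4δ·bs(F)}(F(f,…,f)) ≥ deg_ε(F) · deg_{1−δ}(f). -/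
/-- `flipSet z S` negates the coordinates of `z` indexed by `S`. -/
def flipSet {M : ℕ} (z : Fin M → ℝ) (S : Finset (Fin M)) : Fin M → ℝ :=
  fun i => if i ∈ S then -z i else z i

/-- Block sensitivity of `F` at the point `z`: the maximum number of pairwise disjoint
blocks whose flipping changes the value of `F`. -/
noncomputable def bsAt {M : ℕ} (F : (Fin M → ℝ) → ℝ) (z : Fin M → ℝ) : ℕ :=
  sSup {r : ℕ | ∃ S : Fin r → Finset (Fin M),
    (∀ i j, i ≠ j → Disjoint (S i) (S j)) ∧ ∀ i, F (flipSet z (S i)) ≠ F z}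

/-- Block sensitivity of `F`: the maximum of `bsAt F z` over Boolean points `z`. -/
noncomputable def bs {M : ℕ} (F : (Fin M → ℝ) → ℝ) : ℕ :=
  sSup {b : ℕ | ∃ z : Fin M → ℝ, (∀ i, z i = 1 ∨ z i = -1) ∧ b = bsAt F z}

/-! ### Independent noise and block sensitivity -/

/-- If the `y i` are independent with weights `q i`, the random set `{i | B i (y i)}` contains each
`i` independently with probability `p i = q i (B i)`. -/
lemma sum_prod_pushforward {M : ℕ} {Y : Type} [Fintype Y] (q : Fin M → Y → ℝ)
    (B : Fin M → Y → Prop) [∀ i y, Decidable (B i y)] (p : Fin M → ℝ)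
    (hq : ∀ i, ∑ y, q i y = 1) (hp : ∀ i, ∑ y, (if B i y then q i y else 0) = p i)
    (G : Finset (Fin M) → ℝ) :
    ∑ y : Fin M → Y, (∏ i, q i (y i)) * G (Finset.univ.filter fun i => B i (y i)) =
      ∑ S : Finset (Fin M), (∏ i, if i ∈ S then p i else 1 - p i) * G S := by
  classical
  have h1 : ∀ (S : Finset (Fin M)) (i : Fin M), (if i ∈ S then p i else 1 - p i) =
      ∑ y, if (B i y ↔ i ∈ S) then q i y else 0 := by
    intro S i
    split_ifs with h
    · simp [h, hp]
    · rw [← hp i, ← hq i, ← Finset.sum_sub_distrib]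
      refine Finset.sum_congr rfl fun y _ => ?_
      by_cases hb : B i y <;> simp [h, hb]
  have h2 : ∀ S : Finset (Fin M), (∏ i, if i ∈ S then p i else 1 - p i) =
      ∑ y : Fin M → Y, if (Finset.univ.filter fun i => B i (y i)) = S
        then ∏ i, q i (y i) else 0 := by
    intro S
    simp_rw [h1 S]
    rw [Finset.prod_univ_sum, Fintype.piFinset_univ]
    refine Finset.sum_congr rfl fun y _ => ?_
    split_ifs with h
    · refine Finset.prod_congr rfl fun i _ => ?_
      rw [if_pos]
      rw [← h]; simp
    · have : ∃ i, ¬ (B i (y i) ↔ i ∈ S) := by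
        by_contra hc
        push Not at hc
        exact h (by ext i; simp [hc i])
      obtain ⟨i, hi⟩ := this
      exact Finset.prod_eq_zero (Finset.mem_univ i) (if_neg hi)
  simp_rw [h2, Finset.sum_mul]
  rw [Finset.sum_comm]
  refine Finset.sum_congr rfl fun y _ => ?_
  simp [ite_mul]

/-- Sensitive blocks are nonempty, so disjoint ones number at most `M`. This makes the suprema
defining `bsAt` and `bs` those of bounded sets. -/
lemma card_le_of_blocks {M r : ℕ} (F : (Fin M → ℝ) → ℝ) (z : Fin M → ℝ)
    (S : Fin r → Finset (Fin M)) (hd : ∀ i j, i ≠ j → Disjoint (S i) (S j))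
    (hS : ∀ i, F (flipSet z (S i)) ≠ F z) : r ≤ M := by
  have hne : ∀ i, (S i).Nonempty := by
    intro i
    by_contra h
    rw [Finset.not_nonempty_iff_eq_empty] at h
    exact hS i (by
      have h0 : flipSet z ∅ = z := by funext k; simp [flipSet]
      rw [h, h0])
  choose g hg using hne
  have hinj : Function.Injective g := by
    intro i j hij
    by_contra h
    exact Finset.disjoint_left.1 (hd i j h) (hg i) (hij ▸ hg j)
  simpa using Fintype.card_le_of_injective g hinj

lemma le_bs {M r : ℕ} (F : (Fin M → ℝ) → ℝ) (z : Fin M → ℝ)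
    (hz : ∀ i, z i = 1 ∨ z i = -1)
    (S : Fin r → Finset (Fin M)) (hd : ∀ i j, i ≠ j → Disjoint (S i) (S j))
    (hS : ∀ i, F (flipSet z (S i)) ≠ F z) : r ≤ bs F := by
  have h1 : r ≤ bsAt F z :=
    le_csSup ⟨M, fun b ⟨S, hd, hS⟩ => card_le_of_blocks F z S hd hS⟩ ⟨S, hd, hS⟩
  refine h1.trans (le_csSup ⟨M, ?_⟩ ⟨z, hz, rfl⟩)
  rintro b ⟨z, -, rfl⟩
  exact csSup_le' fun b ⟨S, hd, hS⟩ => card_le_of_blocks F z S hd hS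

/-- Flipping each coordinate `i` of `z` independently with probability `p i ≤ 1 / m` changes the
value of `F` with probability at most `bs F / m`. -/
lemma noise_le {M m : ℕ} (F : (Fin M → ℝ) → ℝ) (z : Fin M → ℝ)
    (hz : ∀ i, z i = 1 ∨ z i = -1) (p : Fin M → ℝ) (hp0 : ∀ i, 0 ≤ p i)
    (hpm : ∀ i, m * p i ≤ 1) :
    m * ∑ S : Finset (Fin M), (∏ i, if i ∈ S then p i else 1 - p i) *
      (if F (flipSet z S) ≠ F z then 1 else 0) ≤ bs F := by
  classical
  -- Coordinate `i` joins block `j` with probability `p i`, and no block with the remaining mass.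
  let q : Fin M → Option (Fin m) → ℝ := fun i o => o.elim (1 - m * p i) (fun _ => p i)
  have hq0 : ∀ i o, 0 ≤ q i o := by
    intro i o
    cases o with
    | none => simpa [q] using hpm i
    | some j => exact hp0 i
  have hq : ∀ i, ∑ o, q i o = 1 := by intro i; simp [q, Fintype.sum_option]
  have hB : ∀ j : Fin m, ∀ i, ∑ o, (if o = some j then q i o else 0) = p i := by
    intro j i; simp [q]
  have key := fun j : Fin m => sum_prod_pushforward q (fun _ o => o = some j) p hq (hB j)
    (fun S => if F (flipSet z S) ≠ F z then 1 else 0)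
  calc _ = ∑ j : Fin m, ∑ y : Fin M → Option (Fin m), (∏ i, q i (y i)) *
        (if F (flipSet z (Finset.univ.filter fun i => y i = some j)) ≠ F z then 1 else 0) := by
        simp_rw [key]; simp
    _ = ∑ y : Fin M → Option (Fin m), (∏ i, q i (y i)) * ∑ j : Fin m,
        (if F (flipSet z (Finset.univ.filter fun i => y i = some j)) ≠ F z then 1 else 0) := by
        rw [Finset.sum_comm]; simp_rw [Finset.mul_sum]
    _ ≤ ∑ y : Fin M → Option (Fin m), (∏ i, q i (y i)) * bs F := by
        refine Finset.sum_le_sum fun y _ => mul_le_mul_of_nonneg_left ?_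
          (Finset.prod_nonneg fun i _ => hq0 _ _)
        rw [Finset.sum_boole]
        norm_cast
        set J := Finset.univ.filter fun j : Fin m =>
          F (flipSet z (Finset.univ.filter fun i => y i = some j)) ≠ F z with hJ
        refine le_bs F z hz
          (fun k => Finset.univ.filter fun i => y i = some (J.equivFin.symm k : Fin m)) ?_ ?_
        · intro a b hab
          rw [Finset.disjoint_left]
          intro i hi hi'
          simp only [Finset.mem_filter, Finset.mem_univ, true_and] at hi hi'
          rw [hi, Option.some_inj] at hi'
          exact hab (J.equivFin.symm.injective (Subtype.ext hi'))
        · intro k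
          exact (Finset.mem_filter.1 (J.equivFin.symm k).2).2
    _ = bs F := by
        rw [← Finset.sum_mul, ← Fintype.piFinset_univ, ← Finset.prod_univ_sum]
        simp [hq]


/-! ### Approximate degree and duality -/

/-- The real sign `±1` encoded by a bit, with `true` encoded by `-1`. Points of the cube are
indexed by Boolean vectors so as to range over a finite type. -/
def sg (b : Bool) : ℝ := if b then -1 else 1

lemma sg_cases (b : Bool) : sg b = 1 ∨ sg b = -1 := by cases b <;> simp [sg]

lemma exists_sg {ι : Type} (x : ι → ℝ) (hx : ∀ i, x i = 1 ∨ x i = -1) :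
    ∃ b : ι → Bool, (fun i => sg (b i)) = x := by
  refine ⟨fun i => decide (x i = -1), funext fun i => ?_⟩
  rcases hx i with h | h <;> norm_num [sg, h]

/-- Every function on the cube agrees there with a (multilinear) polynomial. -/
lemma exists_interp {ι : Type} [Fintype ι] (f : (ι → ℝ) → ℝ) :
    ∃ p : MvPolynomial ι ℝ, ∀ x : ι → ℝ, (∀ i, x i = 1 ∨ x i = -1) →
      MvPolynomial.eval x p = f x := by
  classical
  refine ⟨∑ b : ι → Bool, MvPolynomial.C (f fun i => sg (b i)) *
    ∏ i, (MvPolynomial.C (1 / 2) * (1 + MvPolynomial.C (sg (b i)) * MvPolynomial.X i)), ?_⟩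
  intro x hx
  obtain ⟨c, rfl⟩ := exists_sg x hx
  simp only [map_sum, map_mul, map_prod, map_add, map_one, MvPolynomial.eval_C,
    MvPolynomial.eval_X]
  rw [Finset.sum_eq_single c]
  · rw [Finset.prod_eq_one, mul_one]
    intro i _
    rcases sg_cases (c i) with h | h <;> norm_num [h]
  · intro b _ hb
    obtain ⟨i, hi⟩ := Function.ne_iff.1 hb
    rw [Finset.prod_eq_zero (Finset.mem_univ i), mul_zero]
    cases h1 : b i <;> cases h2 : c i <;> simp_all [sg]
  · simp

/-- For `0 ≤ ε` the infimum defining `approxDeg` is over a nonempty set, hence attained. -/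
lemma approxDeg_spec {ι : Type} [Fintype ι] (f : (ι → ℝ) → ℝ) {ε : ℝ} (hε : 0 ≤ ε) :
    ∃ p : MvPolynomial ι ℝ, p.totalDegree ≤ approxDeg f ε ∧
      ∀ x : ι → ℝ, (∀ i, x i = 1 ∨ x i = -1) → |MvPolynomial.eval x p - f x| ≤ ε := by
  obtain ⟨p, hp⟩ := exists_interp f
  refine Nat.sInf_mem (s := {d : ℕ | ∃ p : MvPolynomial ι ℝ, p.totalDegree ≤ d ∧
    ∀ x : ι → ℝ, (∀ i, x i = 1 ∨ x i = -1) → |MvPolynomial.eval x p - f x| ≤ ε})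
    ⟨p.totalDegree, p, le_rfl, fun x hx => ?_⟩
  simpa [hp x hx] using hε

/-- If no element of `V` approximates `g` within `c` in sup norm, then a functional of `ℓ¹` norm `1`
vanishing on `V` takes a value at least `c` at `g`. -/
lemma exists_dual {X : Type} [Fintype X] (V : Submodule ℝ (X → ℝ)) (g : X → ℝ) (c : ℝ)
    (hc : 0 ≤ c) (hV : ∀ v ∈ V, ¬ ∀ x, |v x - g x| ≤ c) :
    ∃ ψ : X → ℝ, ∑ x, |ψ x| = 1 ∧ (∀ v ∈ V, ∑ x, ψ x * v x = 0) ∧ c ≤ ∑ x, ψ x * g x := by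
  classical
  have : IsClosed (V : Set (X → ℝ)) := V.closed_of_finiteDimensional
  have hgV : g ∉ V := fun h => hV g h fun x => by simpa using hc
  have hne : (Submodule.Quotient.mk g : (X → ℝ) ⧸ V) ≠ 0 := by
    rwa [Ne, Submodule.Quotient.mk_eq_zero]
  have hnorm : c ≤ ‖(Submodule.Quotient.mk g : (X → ℝ) ⧸ V)‖ := by
    by_contra! h
    obtain ⟨m, hm, hm'⟩ := Submodule.Quotient.norm_mk_lt
      (Submodule.Quotient.mk g : (X → ℝ) ⧸ V) (sub_pos.2 h)
    rw [Submodule.Quotient.eq] at hm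
    refine hV (g - m) (by simpa using V.neg_mem hm) fun x => ?_
    have := norm_le_pi_norm m x
    rw [Real.norm_eq_abs] at this
    rw [Pi.sub_apply, sub_sub_cancel_left, abs_neg]
    linarith
  obtain ⟨φ, hφ, hφg⟩ := exists_dual_vector'' ℝ (Submodule.Quotient.mk g : (X → ℝ) ⧸ V)
  have hφg' : φ (Submodule.Quotient.mk g) = ‖(Submodule.Quotient.mk g : (X → ℝ) ⧸ V)‖ := by
    simpa using hφg
  let L : (X → ℝ) →ₗ[ℝ] ℝ := φ.toLinearMap ∘ₗ V.mkQ
  have hL : ∀ v, L v = ∑ x, L (Pi.single x 1) * v x := by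
    intro v
    conv_lhs => rw [LinearMap.pi_apply_eq_sum_univ L v]
    refine Finset.sum_congr rfl fun x _ => ?_
    rw [smul_eq_mul, mul_comm]
    congr 2
    ext y
    simp [Pi.single_apply, eq_comm]
  set ψ : X → ℝ := fun x => L (Pi.single x 1) with hψ
  have hLg : L g = ‖(Submodule.Quotient.mk g : (X → ℝ) ⧸ V)‖ := hφg'
  have hpos : 0 < L g := by rw [hLg]; exact norm_pos_iff.2 hne
  set s := ∑ x, |ψ x| with hs
  have hs1 : s ≤ 1 := by
    have h1 : s = L (fun x => SignType.sign (ψ x)) := by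
      rw [hL]
      exact Finset.sum_congr rfl fun x _ => (by rw [mul_comm, sign_mul_self])
    rw [h1]
    have h2 : ‖(fun x => (SignType.sign (ψ x) : ℝ))‖ ≤ 1 := by
      rw [pi_norm_le_iff_of_nonneg zero_le_one]
      intro x
      cases SignType.sign (ψ x) <;> simp
    calc _ ≤ ‖L (fun x => (SignType.sign (ψ x) : ℝ))‖ := le_abs_self _
      _ ≤ ‖φ‖ * ‖(Submodule.Quotient.mk (fun x => (SignType.sign (ψ x) : ℝ)) : (X → ℝ) ⧸ V)‖ :=
        φ.le_opNorm _
      _ ≤ 1 * 1 := mul_le_mul hφ ((Submodule.Quotient.norm_mk_le _ _).trans h2)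
        (norm_nonneg _) zero_le_one
      _ = 1 := one_mul 1
  have hs0 : 0 < s := by
    refine lt_of_le_of_ne (Finset.sum_nonneg fun x _ => abs_nonneg _) fun h => ?_
    have h0 : ∀ x, ψ x = 0 := fun x => abs_eq_zero.1
      ((Finset.sum_eq_zero_iff_of_nonneg fun x _ => abs_nonneg (ψ x)).1 h.symm x
        (Finset.mem_univ x))
    rw [hL] at hpos
    exact hpos.ne' (Finset.sum_eq_zero fun x _ => by
      rw [show L (Pi.single x 1) = 0 from h0 x, zero_mul])
  -- Hahn–Banach only gives norm at most `1`; rescaling can only increase the correlation.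
  refine ⟨fun x => s⁻¹ * ψ x, ?_, ?_, ?_⟩
  · simp_rw [abs_mul, abs_of_pos (inv_pos.2 hs0)]
    rw [← Finset.mul_sum, inv_mul_cancel₀ hs0.ne']
  · intro v hv
    simp_rw [mul_assoc]
    rw [← Finset.mul_sum, ← hL]
    have : L v = 0 := by
      change φ (Submodule.Quotient.mk v) = 0
      rw [(Submodule.Quotient.mk_eq_zero V).2 hv, map_zero]
    rw [this, mul_zero]
  · simp_rw [mul_assoc]
    rw [← Finset.mul_sum, ← hL]
    calc c ≤ L g := hLg ▸ hnorm
      _ = 1 * L g := (one_mul _).symm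
      _ ≤ s⁻¹ * L g := mul_le_mul_of_nonneg_right ((one_le_inv₀ hs0).2 hs1) hpos.le

/-- For `c < 0` no approximation exists, and `approxDeg f c` is `sInf ∅ = 0`. -/
lemma nonneg_of_approxDeg_pos {ι : Type} [Fintype ι] {f : (ι → ℝ) → ℝ} {c : ℝ}
    (h : 0 < approxDeg f c) : 0 ≤ c := by
  obtain ⟨k, p, -, hp⟩ := Nat.nonempty_of_pos_sInf h
  exact (abs_nonneg _).trans (hp (fun _ => 1) fun _ => Or.inl rfl)

/-- The dual polynomial witnessing that `f` has `c`-approximate degree at least `d`. -/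
lemma exists_dual_poly {N d : ℕ} (f : (Fin N → ℝ) → ℝ) (c : ℝ) (hd : 0 < d)
    (hdf : d = approxDeg f c) :
    ∃ ψ : (Fin N → Bool) → ℝ, ∑ x, |ψ x| = 1 ∧
      (∀ p : MvPolynomial (Fin N) ℝ, p.totalDegree < d →
        ∑ x, ψ x * MvPolynomial.eval (fun j => sg (x j)) p = 0) ∧
      c ≤ ∑ x, ψ x * f fun j => sg (x j) := by
  let E : MvPolynomial (Fin N) ℝ →ₗ[ℝ] ((Fin N → Bool) → ℝ) :=
    { toFun := fun p x => MvPolynomial.eval (fun j => sg (x j)) p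
      map_add' := fun p q => by ext; simp
      map_smul' := fun r p => by ext; simp }
  have hne : 0 < approxDeg f c := hdf ▸ hd
  have hc : 0 ≤ c := nonneg_of_approxDeg_pos hne
  obtain ⟨ψ, h1, h2, h3⟩ := exists_dual
    ((MvPolynomial.restrictTotalDegree (Fin N) ℝ (d - 1)).map E)
    (fun x => f fun j => sg (x j)) c hc (by
      rintro v ⟨p, hp, rfl⟩ h
      rw [SetLike.mem_coe, MvPolynomial.mem_restrictTotalDegree] at hp
      have : approxDeg f c ≤ d - 1 := Nat.sInf_le ⟨p, hp, fun x hx => by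
        obtain ⟨b, rfl⟩ := exists_sg x hx
        exact h b⟩
      omega)
  refine ⟨ψ, h1, fun p hp => h2 (E p) ⟨p, ?_, rfl⟩, h3⟩
  rw [SetLike.mem_coe, MvPolynomial.mem_restrictTotalDegree]
  omega

/-- Only the factors with `d ≤ e i` depend on their variable, and each of these accounts for `d` in
`∑ i, e i`. -/
lemma totalDegree_prod_le {M d : ℕ} (A B : Fin M → ℝ) (e : Fin M → ℕ)
    (hB : ∀ i, e i < d → B i = 0) :
    d * (∏ i, (MvPolynomial.C (A i) + MvPolynomial.C (B i) * MvPolynomial.X i :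
      MvPolynomial (Fin M) ℝ)).totalDegree ≤ ∑ i, e i := by
  refine (Nat.mul_le_mul_left d (MvPolynomial.totalDegree_finsetProd _ _)).trans ?_
  rw [Finset.mul_sum]
  refine Finset.sum_le_sum fun i _ => ?_
  by_cases h : e i < d
  · simp [hB i h]
  · refine le_trans ?_ (not_lt.1 h)
    have hdeg : (MvPolynomial.C (A i) + MvPolynomial.C (B i) * MvPolynomial.X i :
        MvPolynomial (Fin M) ℝ).totalDegree ≤ 1 := by
      refine (MvPolynomial.totalDegree_add _ _).trans (max_le (by simp) ?_)
      exact (MvPolynomial.totalDegree_mul _ _).trans (by simp)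
    exact (Nat.mul_le_mul_left d hdeg).trans (mul_one d).le

/-! ### Averaging an approximation of the composed function -/

/-- The average of `p` over independent `x i` of weights `|ψ| + z i * ψ` is a polynomial in `z` whose
degree is smaller than that of `p` by a factor `d`. -/
lemma exists_average {M N d : ℕ} (hd : 0 < d) (ψ : (Fin N → Bool) → ℝ)
    (hψ : ∀ p : MvPolynomial (Fin N) ℝ, p.totalDegree < d →
        ∑ x, ψ x * MvPolynomial.eval (fun j => sg (x j)) p = 0)
    (p : MvPolynomial (Fin M × Fin N) ℝ) :
    ∃ q : MvPolynomial (Fin M) ℝ, d * q.totalDegree ≤ p.totalDegree ∧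
      ∀ z : Fin M → ℝ, MvPolynomial.eval z q =
        ∑ x : Fin M → Fin N → Bool, (∏ i, (|ψ (x i)| + z i * ψ (x i))) *
          MvPolynomial.eval (fun ij => sg (x ij.1 ij.2)) p := by
  classical
  -- `mon s i` is the part of the monomial `s` in the variables of the `i`-th block.
  let mon : (Fin M × Fin N →₀ ℕ) → Fin M → (Fin N → Bool) → ℝ :=
    fun s i x => ∏ j, sg (x j) ^ s (i, j)
  let A : (Fin M × Fin N →₀ ℕ) → Fin M → ℝ := fun s i => ∑ x, |ψ x| * mon s i x
  let B : (Fin M × Fin N →₀ ℕ) → Fin M → ℝ := fun s i => ∑ x, ψ x * mon s i x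
  refine ⟨∑ s ∈ p.support, MvPolynomial.C (p.coeff s) *
    ∏ i, (MvPolynomial.C (A s i) + MvPolynomial.C (B s i) * MvPolynomial.X i), ?_, ?_⟩
  · rw [mul_comm, ← Nat.le_div_iff_mul_le hd]
    refine MvPolynomial.totalDegree_finsetSum_le fun s hs => ?_
    refine (MvPolynomial.totalDegree_mul _ _).trans ?_
    rw [MvPolynomial.totalDegree_C, zero_add, Nat.le_div_iff_mul_le hd, mul_comm]
    refine (totalDegree_prod_le (A s) (B s) (fun i => ∑ j, s (i, j)) ?_).trans ?_
    · intro i hi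
      have := hψ (∏ j, MvPolynomial.X j ^ s (i, j)) (lt_of_le_of_lt
        ((MvPolynomial.totalDegree_finsetProd _ _).trans
          (Finset.sum_le_sum fun j _ => by simp)) hi)
      simpa [map_prod, B, mon] using this
    · refine le_trans (le_of_eq ?_) (MvPolynomial.le_totalDegree hs)
      rw [Finsupp.sum_fintype _ _ (fun _ => rfl), Fintype.sum_prod_type]
  · intro z
    simp only [map_sum, map_mul, map_prod, map_add, MvPolynomial.eval_C, MvPolynomial.eval_X]
    simp_rw [MvPolynomial.eval_eq' _ p, Finset.mul_sum]
    rw [Finset.sum_comm]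
    refine Finset.sum_congr rfl fun s _ => ?_
    have : ∀ i, A s i + B s i * z i = ∑ x, (|ψ x| + z i * ψ x) * mon s i x := by
      intro i
      simp only [A, B]
      rw [Finset.sum_mul, ← Finset.sum_add_distrib]
      exact Finset.sum_congr rfl fun x _ => by ring
    simp_rw [this]
    rw [Finset.prod_univ_sum, Fintype.piFinset_univ, Finset.mul_sum]
    refine Finset.sum_congr rfl fun x _ => ?_
    rw [Finset.prod_mul_distrib, Fintype.prod_prod_type]
    ring

/-- Under the weight `|ψ| + z * ψ`, the event `f ≠ z` has probability at most `δ`. -/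
lemma error_le {N : ℕ} (f : (Fin N → ℝ) → ℝ)
    (hf : ∀ x : Fin N → ℝ, (∀ j, x j = 1 ∨ x j = -1) → f x = 1 ∨ f x = -1)
    (ψ : (Fin N → Bool) → ℝ) (δ : ℝ) (h1 : ∑ x, |ψ x| = 1)
    (hc : 1 - δ ≤ ∑ x, ψ x * f fun j => sg (x j)) (z : ℝ) (hz : z = 1 ∨ z = -1) :
    ∑ x, (if (f fun j => sg (x j)) ≠ z then |ψ x| + z * ψ x else 0) ≤ δ := by
  calc _ ≤ ∑ x, (|ψ x| - ψ x * f fun j => sg (x j)) := by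
        refine Finset.sum_le_sum fun x _ => ?_
        have ha := neg_abs_le (ψ x)
        have hb := le_abs_self (ψ x)
        rcases hf (fun j => sg (x j)) (fun j => sg_cases _) with h | h <;>
          rcases hz with rfl | rfl <;> rw [h] <;> norm_num <;> linarith
    _ ≤ δ := by rw [Finset.sum_sub_distrib, h1]; linarith

/-- The average of an approximation `p` of `F(f,…,f)` approximates `F`, at the cost of an additional
error `4 * δ * bs F`. -/
lemma average_close {M N : ℕ} (F : (Fin M → ℝ) → ℝ) (f : (Fin N → ℝ) → ℝ)
    (hF : ∀ z : Fin M → ℝ, (∀ i, z i = 1 ∨ z i = -1) → F z = 1 ∨ F z = -1)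
    (hf : ∀ x : Fin N → ℝ, (∀ j, x j = 1 ∨ x j = -1) → f x = 1 ∨ f x = -1)
    (δ : ℝ) (hδ : 0 < δ) (hδ1 : δ ≤ 1) (ψ : (Fin N → Bool) → ℝ) (h1 : ∑ x, |ψ x| = 1)
    (h0 : ∑ x, ψ x = 0) (hc : 1 - δ ≤ ∑ x, ψ x * f fun j => sg (x j))
    (η : ℝ) (p : (Fin M → Fin N → Bool) → ℝ)
    (hp : ∀ x, |p x - F fun i => f fun j => sg (x i j)| ≤ η)
    (z : Fin M → ℝ) (hz : ∀ i, z i = 1 ∨ z i = -1) :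
    |∑ x : Fin M → Fin N → Bool, (∏ i, (|ψ (x i)| + z i * ψ (x i))) * p x - F z| ≤
      η + 4 * δ * bs F := by
  classical
  let w : Fin M → (Fin N → Bool) → ℝ := fun i x => |ψ x| + z i * ψ x
  have hw0 : ∀ i x, 0 ≤ w i x := by
    intro i x
    have ha := neg_abs_le (ψ x)
    have hb := le_abs_self (ψ x)
    rcases hz i with h | h <;> simp only [w, h] <;> linarith
  have hw1 : ∀ i, ∑ x, w i x = 1 := by
    intro i
    simp only [w]
    rw [Finset.sum_add_distrib, ← Finset.mul_sum, h1, h0, mul_zero, add_zero]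
  have hW0 : ∀ x : Fin M → Fin N → Bool, 0 ≤ ∏ i, w i (x i) :=
    fun x => Finset.prod_nonneg fun i _ => hw0 i _
  have hW1 : ∑ x : Fin M → Fin N → Bool, ∏ i, w i (x i) = 1 := by
    rw [← Fintype.piFinset_univ, ← Finset.prod_univ_sum]
    simp [hw1]
  let Bad : Finset (Fin M) → ℝ := fun S => if F (flipSet z S) ≠ F z then 1 else 0
  let blk : (Fin M → Fin N → Bool) → Finset (Fin M) :=
    fun x => Finset.univ.filter fun i => (f fun j => sg (x i j)) ≠ z i
  have hflip : ∀ x, (fun i => f fun j => sg (x i j)) = flipSet z (blk x) := by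
    intro x
    funext i
    simp only [flipSet, blk, Finset.mem_filter, Finset.mem_univ, true_and]
    rcases hf (fun j => sg (x i j)) (fun j => sg_cases _) with h | h <;>
      rcases hz i with h' | h' <;> rw [h, h'] <;> norm_num
  have hFdiff : ∀ x, |(F fun i => f fun j => sg (x i j)) - F z| ≤ 2 * Bad (blk x) := by
    intro x
    have hx := hF (fun i => f fun j => sg (x i j)) fun i => hf _ fun j => sg_cases _
    rw [hflip x] at hx ⊢
    simp only [Bad]
    by_cases h : F (flipSet z (blk x)) = F z
    · simp [h]
    · rw [if_pos h]
      rcases hx with h2 | h2 <;> rcases hF z hz with h3 | h3 <;> rw [h2, h3] <;> norm_num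
  set P := ∑ x : Fin M → Fin N → Bool, (∏ i, w i (x i)) * Bad (blk x) with hP
  have hP0 : 0 ≤ P := Finset.sum_nonneg fun x _ => mul_nonneg (hW0 x) (by
    simp only [Bad]; split_ifs <;> norm_num)
  -- As `m` is a positive integer, rounding `1 / δ` down to `m` loses at most a factor `2`.
  set m := ⌊1 / δ⌋₊ with hm
  have hmδ : m * δ ≤ 1 := (le_div_iff₀ hδ).1 (Nat.floor_le (by positivity))
  have hm1 : (1 : ℝ) ≤ m := by
    exact_mod_cast Nat.le_floor (by rw [Nat.cast_one]; exact (one_le_div hδ).2 hδ1)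
  have hmδ2 : 1 ≤ 2 * δ * m := by
    have := (div_lt_iff₀ hδ).1 (Nat.lt_floor_add_one (1 / δ))
    rw [← hm] at this
    nlinarith
  have hmP : m * P ≤ bs F := by
    have := sum_prod_pushforward w (fun i x => (f fun j => sg (x j)) ≠ z i) _ hw1
      (fun i => rfl) Bad
    rw [hP]
    simp only [blk]
    rw [this]
    refine noise_le F z hz _ (fun i => Finset.sum_nonneg fun x _ => ?_) fun i => ?_
    · split_ifs
      · exact hw0 i x
      · exact le_rfl
    · exact (mul_le_mul_of_nonneg_left (error_le f hf ψ δ h1 hc (z i) (hz i))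
        (Nat.cast_nonneg m)).trans hmδ
  have hPb : P ≤ 2 * δ * bs F := by
    calc P = 1 * P := (one_mul P).symm
      _ ≤ (2 * δ * m) * P := mul_le_mul_of_nonneg_right hmδ2 hP0
      _ = 2 * δ * (m * P) := by ring
      _ ≤ 2 * δ * bs F := mul_le_mul_of_nonneg_left hmP (by positivity)
  calc _ = |∑ x : Fin M → Fin N → Bool, (∏ i, w i (x i)) * (p x - F z)| := by
        simp_rw [mul_sub]
        rw [Finset.sum_sub_distrib, ← Finset.sum_mul, hW1, one_mul]
    _ ≤ ∑ x : Fin M → Fin N → Bool, (∏ i, w i (x i)) * (η + 2 * Bad (blk x)) := by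
        refine (Finset.abs_sum_le_sum_abs _ _).trans (Finset.sum_le_sum fun x _ => ?_)
        rw [abs_mul, abs_of_nonneg (hW0 x)]
        exact mul_le_mul_of_nonneg_left ((abs_sub_le _ _ _).trans
          (add_le_add (hp x) (hFdiff x))) (hW0 x)
    _ = η + 2 * P := by
        simp_rw [mul_add, Finset.sum_add_distrib]
        rw [← Finset.sum_mul, hW1, one_mul, hP, Finset.mul_sum]
        congr 1
        exact Finset.sum_congr rfl fun x _ => by ring
    _ ≤ η + 4 * δ * bs F := by linarith

theorem stmt2 {M N : ℕ} (F : (Fin M → ℝ) → ℝ) (f : (Fin N → ℝ) → ℝ)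
    (hF : ∀ z : Fin M → ℝ, (∀ i, z i = 1 ∨ z i = -1) → F z = 1 ∨ F z = -1)
    (hf : ∀ x : Fin N → ℝ, (∀ j, x j = 1 ∨ x j = -1) → f x = 1 ∨ f x = -1)
    (ε δ : ℝ) (hε : 0 < ε) (hδ : 0 < δ)
    (hpos : 0 < ε - 4 * δ * (bs F : ℝ)) :
    approxDeg (fun x : (Fin M × Fin N) → ℝ => F (fun i => f (fun j => x (i, j))))
        (ε - 4 * δ * (bs F : ℝ)) ≥
      approxDeg F ε * approxDeg f (1 - δ) := by
  obtain hd | hd := Nat.eq_zero_or_pos (approxDeg f (1 - δ))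
  · simp [hd]
  have hδ1 : δ ≤ 1 := sub_nonneg.1 (nonneg_of_approxDeg_pos hd)
  obtain ⟨ψ, h1, horth, hc⟩ := exists_dual_poly f (1 - δ) hd rfl
  have h0 : ∑ x, ψ x = 0 := by simpa using horth 1 (by simpa using hd)
  obtain ⟨p, hpdeg, hp⟩ := approxDeg_spec
    (fun x : (Fin M × Fin N) → ℝ => F (fun i => f (fun j => x (i, j)))) hpos.le
  obtain ⟨q, hqdeg, hq⟩ := exists_average hd ψ horth p
  have hFq : approxDeg F ε ≤ q.totalDegree := Nat.sInf_le ⟨q, le_rfl, fun z hz => by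
    rw [hq z]
    refine (average_close F f hF hf δ hδ hδ1 ψ h1 h0 hc (ε - 4 * δ * (bs F : ℝ)) _
      (fun x => hp (fun ij => sg (x ij.1 ij.2)) fun ij => sg_cases _) z hz).trans ?_
    linarith⟩
  calc approxDeg F ε * approxDeg f (1 - δ) ≤ q.totalDegree * approxDeg f (1 - δ) :=
        Nat.mul_le_mul_right _ hFq
    _ = approxDeg f (1 - δ) * q.totalDegree := mul_comm _ _
    _ ≤ p.totalDegree := hqdeg
    _ ≤ _ := hpdeg
end
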